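/- Let M be a loopless matroid on the ground set E = {0,1,…,n}, and let F ⊊ F' be flats of M. Then the vector ∑_G β(M|G/F)·β(M|F'/G)·e_{G∖F} in ℝ^{n+1}, where the sum ranges over all flats G of M with F ⊊ G ⊊ F', is a scalar multiple of the vector e_{F'∖F}. -/

import Mathlib

open Matroid Set

/-- The Möbius function of a collection of "flats" (finsets), defined recursively:
`mob flats F G = 0` if `F ⊄ G`, `1` if `F = G`, and `-∑_{F ⊆ G' ⊊ G} mob flats F G'` otherwise,
the sum being over members `G'` of `flats`. -/
noncomputable def mob {α : Type*} [DecidableEq α] (flats : Finset (Finset α)) :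
    Finset α → Finset α → ℤ
  | F, G =>
    if F ⊆ G then
      if F = G then 1
      else - ∑ G' ∈ (flats.filter fun G' => F ⊆ G' ∧ G' ⊂ G).attach,
        mob flats F G'.1
    else 0
termination_by F G => G.card
decreasing_by
  exact Finset.card_lt_card (Finset.mem_filter.mp G'.2).2.2

/-- The rank of a set `X` in a matroid `M`: the largest cardinality of an independent
subset of `X`. -/
noncomputable def rk {α : Type*} (M : Matroid α) (X : Set α) : ℕ :=
  sSup (Set.ncard '' {I | M.Indep I ∧ I ⊆ X})

/-- An element `e` is a loop of `M` if it belongs to the ground set but to no base. -/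
def mLoop {α : Type*} (M : Matroid α) (e : α) : Prop :=
  e ∈ M.E ∧ ∀ B, M.IsBase B → e ∉ B

/-- An element `e` is a coloop of `M` if it belongs to every base. -/
def mColoop {α : Type*} (M : Matroid α) (e : α) : Prop :=
  ∀ B, M.IsBase B → e ∈ B

/-- A matroid is loopless if it has no loops. -/
def mLoopless {α : Type*} (M : Matroid α) : Prop := ∀ e, ¬ mLoop M e

/-- Contraction of a set `C` in a matroid `M`, defined by duality:
`M / C = (M✶ \ C)✶`, where deletion is restriction to the complement. -/
noncomputable def mContr {α : Type*} (M : Matroid α) (C : Set α) : Matroid α :=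
  (M✶ ↾ (M✶.E \ C))✶

/-- The minor `M|G/F` of `M` obtained by restricting to `G` and contracting `F`. -/
noncomputable def mMinor {α : Type*} (M : Matroid α) (G F : Set α) : Matroid α :=
  mContr (M ↾ G) F

open Classical in
/-- The finset of all flats of a matroid on `Fin m`, as finsets. -/
noncomputable def flatsF {m : ℕ} (M : Matroid (Fin m)) : Finset (Finset (Fin m)) :=
  Finset.univ.filter fun F => M.IsFlat ↑F

open Classical in
/-- The beta invariant `β(M) = (-1)^{r(M)} ∑_{F ∈ L(M)} μ(∅,F) r(F)` of a loopless
matroid `M`; it is `0` if `M` has a loop. -/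
noncomputable def betaInv {m : ℕ} (M : Matroid (Fin m)) : ℤ :=
  if mLoopless M then
    (-1) ^ (rk M M.E) * ∑ F ∈ flatsF M, mob (flatsF M) ∅ F * (rk M ↑F : ℤ)
  else 0

/-- The 0/1 indicator vector of a finset `S ⊆ {0,…,m-1}`, as a vector in `ℝ^m`. -/
def eVec {m : ℕ} (S : Finset (Fin m)) : Fin m → ℝ := fun i => if i ∈ S then 1 else 0

/-
In the incidence algebra of a finite join-semilattice with a function `r`, let `Q = μ * diag r * ζ`.
For the rank function of the lattice of flats, `Q F G` is `β(M|G/F)` up to the sign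
`(-1) ^ (rk F + rk G)`, so the coordinate of the vector at `i ∈ F' \ F` is, up to a common sign,
the sum of `Q F G * Q G F'` over the `G` strictly between `F` and `F'` that contain `i`, that is,
the `(F, F')` entry of `Q * e * Q` up to its end terms, with `e` the diagonal idempotent of the
elements above the flat spanned by `i`.

Joining with `i` raises the rank of every flat not containing `i` by exactly one. Together with
Weisner's theorem this gives `μ * e * ζ = e + Q * e - e * Q`. The left-hand side commutes with `Q`,
both being conjugates of diagonal elements; comparing the `(F, F')` entries of the two products
gives `2 * (Q * e * Q) F F' = (Q * Q) F F' + Q F F'`, which no longer depends on `i`.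
-/

open IncidenceAlgebra

section IncidenceDiagonal

variable {α 𝕜 : Type*} [PartialOrder α] [LocallyFiniteOrder α] [DecidableEq α] [Semiring 𝕜]

/-- The diagonal element of the incidence algebra with entries `f`, as a ring homomorphism. -/
def incidenceDiagonal : (α → 𝕜) →+* IncidenceAlgebra 𝕜 α where
  toFun f := ⟨fun a b => if a = b then f a else 0, fun _ _ h => if_neg fun e => h e.le⟩
  map_one' := by ext; simp
  map_mul' f g := by ext; aesop
  map_zero' := by ext; simp
  map_add' f g := by
    ext
    simp only [coe_mk, IncidenceAlgebra.add_apply, Pi.add_apply]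
    split_ifs <;> simp

lemma incidenceDiagonal_apply (f : α → 𝕜) (a b : α) :
    incidenceDiagonal f a b = if a = b then f a else 0 := rfl

lemma incidenceDiagonal_mul_apply (f : α → 𝕜) (g : IncidenceAlgebra 𝕜 α) (a b : α) :
    (incidenceDiagonal f * g) a b = f a * g a b := by
  by_cases h : a ≤ b
  · simp [incidenceDiagonal_apply, h]
  · simp [apply_eq_zero_of_not_le h]

lemma mul_incidenceDiagonal_apply (g : IncidenceAlgebra 𝕜 α) (f : α → 𝕜) (a b : α) :
    (g * incidenceDiagonal f) a b = g a b * f b := by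
  by_cases h : a ≤ b
  · simp [incidenceDiagonal_apply, h]
  · simp [apply_eq_zero_of_not_le h]

end IncidenceDiagonal

lemma mul_apply_eq_sum_Ioo_add {α 𝕜 : Type*} [PartialOrder α] [LocallyFiniteOrder α]
    [NonUnitalNonAssocSemiring 𝕜] (f g : IncidenceAlgebra 𝕜 α) {a c : α} (hac : a < c) :
    (f * g) a c = ∑ x ∈ Finset.Ioo a c, f a x * g x c + f a a * g a c + f a c * g c c := by
  rw [mul_apply, Finset.Icc_eq_cons_Ico hac.le, Finset.sum_cons, Finset.Ico_eq_cons_Ioo hac,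
    Finset.sum_cons]
  abel

section MobiusConj

variable {α 𝕜 : Type*} [PartialOrder α] [LocallyFiniteOrder α] [DecidableEq α] [DecidableLE α]

/-- The conjugate `μ * diag f * ζ` of a diagonal element. For `f` the rank function of a lattice of
flats its entry at `F < G` is, up to sign, the beta invariant of the minor `M|G/F`. -/
def mobiusConj [Ring 𝕜] (f : α → 𝕜) : IncidenceAlgebra 𝕜 α :=
  mu 𝕜 * incidenceDiagonal f * zeta 𝕜

lemma mobiusConj_apply [Ring 𝕜] (f : α → 𝕜) (a b : α) :
    mobiusConj f a b = ∑ x ∈ Finset.Icc a b, mu 𝕜 a x * f x := by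
  refine Finset.sum_congr rfl fun x hx => ?_
  rw [mul_incidenceDiagonal_apply, zeta_of_le (Finset.mem_Icc.1 hx).2, mul_one]

lemma mobiusConj_self [Ring 𝕜] (f : α → 𝕜) (a : α) : mobiusConj f a a = f a := by
  simp [mobiusConj_apply]

lemma mobiusConj_mul [Ring 𝕜] (f g : α → 𝕜) :
    mobiusConj (f * g) = mobiusConj f * mobiusConj g := by
  have hζμ : zeta 𝕜 * mu 𝕜 = (1 : IncidenceAlgebra 𝕜 α) := zeta_mul_mu
  simp only [mobiusConj, map_mul, mul_assoc]
  rw [← mul_assoc (zeta 𝕜) (mu 𝕜), hζμ, one_mul]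

lemma commute_mobiusConj [CommRing 𝕜] (f g : α → 𝕜) : Commute (mobiusConj f) (mobiusConj g) := by
  rw [Commute, SemiconjBy, ← mobiusConj_mul, ← mobiusConj_mul, mul_comm]

end MobiusConj

section Join

variable {α 𝕜 : Type*} [SemilatticeSup α] [LocallyFiniteOrder α] [DecidableEq α]

section Ring

variable [Ring 𝕜]

variable (𝕜) in
/-- The element of the incidence algebra that is `1` exactly on the pairs `(x, x ⊔ i)`. -/
def joinIncidence (i : α) : IncidenceAlgebra 𝕜 α :=
  ⟨fun x y => if x ⊔ i = y then 1 else 0, fun _ _ h => if_neg fun e => h (le_sup_left.trans e.le)⟩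

lemma joinIncidence_mul_apply (i : α) (f : IncidenceAlgebra 𝕜 α) (a b : α) :
    (joinIncidence 𝕜 i * f) a b = f (a ⊔ i) b := by
  by_cases h : a ⊔ i ≤ b
  · simp [joinIncidence, h]
  · simp [joinIncidence, h, apply_eq_zero_of_not_le h]

variable (𝕜) in
/-- The diagonal idempotent of the incidence algebra that selects the elements above `i`. -/
noncomputable def iciProj (i : α) : IncidenceAlgebra 𝕜 α :=
  incidenceDiagonal ((Ici i).indicator 1)

lemma joinIncidence_mul_zeta [DecidableLE α] (i : α) :
    joinIncidence 𝕜 i * zeta 𝕜 = zeta 𝕜 * iciProj 𝕜 i := by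
  ext a b hab
  rw [joinIncidence_mul_apply, iciProj, mul_incidenceDiagonal_apply]
  simp [hab, indicator_apply]

/-- Weisner's theorem: for `¬ i ≤ a` it says that `∑ μ(a, x) = 0` over the `x` with `x ⊔ i = y`. -/
lemma mu_mul_joinIncidence (i : α) : mu 𝕜 * joinIncidence 𝕜 i = iciProj 𝕜 i * mu 𝕜 := by
  classical
  calc mu 𝕜 * joinIncidence 𝕜 i
    _ = mu 𝕜 * (joinIncidence 𝕜 i * zeta 𝕜) * mu 𝕜 := by
      rw [mul_assoc, mul_assoc, zeta_mul_mu, mul_one]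
    _ = iciProj 𝕜 i * mu 𝕜 := by
      rw [joinIncidence_mul_zeta, ← mul_assoc, mu_mul_zeta, one_mul]

variable [DecidableLE α]

lemma iciProj_mul_zeta_mul_iciProj (i : α) :
    iciProj 𝕜 i * zeta 𝕜 * iciProj 𝕜 i = iciProj 𝕜 i * zeta 𝕜 := by
  ext a b hab
  simp only [iciProj, mul_incidenceDiagonal_apply, incidenceDiagonal_mul_apply]
  by_cases h : i ≤ a
  · simp [h, h.trans hab]
  · simp [h]

variable {i : α} {r : α → 𝕜}

lemma joinIncidence_mul_incidenceDiagonal_mul_zeta (hr : ∀ x, ¬ i ≤ x → r (x ⊔ i) = r x + 1) :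
    joinIncidence 𝕜 i * incidenceDiagonal r * zeta 𝕜 =
      (incidenceDiagonal r + 1 - iciProj 𝕜 i) * zeta 𝕜 * iciProj 𝕜 i := by
  have hdiag : incidenceDiagonal r + 1 - iciProj 𝕜 i =
      incidenceDiagonal (r + 1 - (Ici i).indicator 1) := by
    rw [map_sub, map_add, map_one, iciProj]
  ext a b hab
  rw [mul_assoc, joinIncidence_mul_apply, hdiag, iciProj, mul_incidenceDiagonal_apply,
    incidenceDiagonal_mul_apply, incidenceDiagonal_mul_apply]
  by_cases ha : i ≤ a
  · simp [ha, hab, ha.trans hab]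
  · simp [ha, hab, hr a ha, indicator_apply]

lemma mobiusConj_indicator_Ici (hr : ∀ x, ¬ i ≤ x → r (x ⊔ i) = r x + 1) :
    mobiusConj ((Ici i).indicator 1) =
      iciProj 𝕜 i + mobiusConj r * iciProj 𝕜 i - iciProj 𝕜 i * mobiusConj r := by
  have key : iciProj 𝕜 i * mobiusConj r =
      mobiusConj r * iciProj 𝕜 i + iciProj 𝕜 i - mobiusConj ((Ici i).indicator 1) :=
    calc iciProj 𝕜 i * mobiusConj r
      _ = mu 𝕜 * (joinIncidence 𝕜 i * incidenceDiagonal r * zeta 𝕜) := by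
        simp only [mobiusConj, ← mul_assoc, mu_mul_joinIncidence]
      _ = mu 𝕜 * incidenceDiagonal r * zeta 𝕜 * iciProj 𝕜 i + mu 𝕜 * zeta 𝕜 * iciProj 𝕜 i -
          mu 𝕜 * (iciProj 𝕜 i * zeta 𝕜 * iciProj 𝕜 i) := by
        rw [joinIncidence_mul_incidenceDiagonal_mul_zeta hr]
        noncomm_ring
      _ = mobiusConj r * iciProj 𝕜 i + iciProj 𝕜 i - mobiusConj ((Ici i).indicator 1) := by
        rw [iciProj_mul_zeta_mul_iciProj, mu_mul_zeta, one_mul, ← mul_assoc]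
        rfl
  rw [key]
  abel

end Ring

section CommRing

variable [CommRing 𝕜] [DecidableLE α] {i a c : α} {r : α → 𝕜}

lemma two_mul_mobiusConj_mul_iciProj_mul_mobiusConj_apply
    (hr : ∀ x, ¬ i ≤ x → r (x ⊔ i) = r x + 1) (ha : ¬ i ≤ a) (hc : i ≤ c) :
    2 * (mobiusConj r * iciProj 𝕜 i * mobiusConj r) a c =
      (mobiusConj r * mobiusConj r) a c + mobiusConj r a c := by
  have hcomm := (commute_mobiusConj r ((Ici i).indicator 1)).eq
  rw [mobiusConj_indicator_Ici hr] at hcomm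
  generalize mobiusConj r = q at hcomm ⊢
  have hexpand : q * iciProj 𝕜 i + q * q * iciProj 𝕜 i - q * iciProj 𝕜 i * q =
      iciProj 𝕜 i * q + q * iciProj 𝕜 i * q - iciProj 𝕜 i * (q * q) := by
    simpa only [mul_sub, mul_add, sub_mul, add_mul, mul_assoc] using hcomm
  have hentry := congrFun (DFunLike.congr_fun hexpand a) c
  simp only [IncidenceAlgebra.add_apply, IncidenceAlgebra.sub_apply] at hentry
  generalize (q * iciProj 𝕜 i * q) a c = s at hentry ⊢
  simp only [iciProj, mul_incidenceDiagonal_apply, incidenceDiagonal_mul_apply,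
    indicator_of_mem (mem_Ici.2 hc), indicator_of_notMem (mt mem_Ici.1 ha), Pi.one_apply,
    mul_one, zero_mul] at hentry
  linear_combination -hentry

theorem two_mul_sum_Ioo_mobiusConj_mul_mobiusConj
    (hr : ∀ x, ¬ i ≤ x → r (x ⊔ i) = r x + 1) (hac : a < c) (ha : ¬ i ≤ a) (hc : i ≤ c) :
    2 * ∑ x ∈ Finset.Ioo a c with i ≤ x, mobiusConj r a x * mobiusConj r x c =
      ∑ x ∈ Finset.Ioo a c, mobiusConj r a x * mobiusConj r x c
        + (1 + r a - r c) * mobiusConj r a c := by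
  have h := two_mul_mobiusConj_mul_iciProj_mul_mobiusConj_apply hr ha hc
  rw [mul_apply_eq_sum_Ioo_add (mobiusConj r * iciProj 𝕜 i) _ hac,
    mul_apply_eq_sum_Ioo_add (mobiusConj r) (mobiusConj r) hac] at h
  simp only [iciProj, mul_incidenceDiagonal_apply, mobiusConj_self,
    indicator_of_mem (mem_Ici.2 hc), indicator_of_notMem (mt mem_Ici.1 ha), Pi.one_apply,
    mul_one, mul_zero, zero_mul] at h
  have hsum : ∑ x ∈ Finset.Ioo a c with i ≤ x, mobiusConj r a x * mobiusConj r x c =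
      ∑ x ∈ Finset.Ioo a c, mobiusConj r a x * (Ici i).indicator 1 x * mobiusConj r x c := by
    rw [Finset.sum_filter]
    exact Finset.sum_congr rfl fun x _ => by simp [indicator_apply]
  rw [hsum]
  linear_combination h

end CommRing

end Join

lemma sum_filter_eq_sum_subtype {ι β : Type*} [AddCommMonoid β] {t : Finset ι} {p : ι → Prop}
    [DecidablePred p] {s : Finset {x // x ∈ t}} (h : ∀ x, x ∈ s ↔ p x.1) (f : ι → β) :
    ∑ x ∈ t with p x, f x = ∑ x ∈ s, f x := by
  classical
  have hs : s = Finset.univ.filter fun x => p x.1 := by ext x; simp [h]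
  rw [hs, Finset.sum_filter, Finset.sum_filter, ← Finset.sum_coe_sort t]

lemma sdiff_le_sdiff_iff_right {α : Type*} [GeneralizedCoheytingAlgebra α] {a b c : α}
    (hcb : c ≤ b) : a \ c ≤ b \ c ↔ a ≤ b := by
  rw [sdiff_le_iff, sup_sdiff_cancel_right hcb]

section Mob

variable {α : Type*} [DecidableEq α] {flats : Finset (Finset α)} {F G H : Finset α}

lemma mob_self : mob flats F F = 1 := by
  rw [mob, if_pos subset_rfl, if_pos rfl]

lemma mob_of_ssubset (h : F ⊂ G) :
    mob flats F G = - ∑ H ∈ flats with F ⊆ H ∧ H ⊂ G, mob flats F H := by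
  rw [mob, if_pos h.subset, if_neg h.ne]
  exact congrArg Neg.neg (Finset.sum_attach _ fun H => mob flats F H)

lemma mob_eq_mu (F G : {S // S ∈ flats}) (h : F ≤ G) : mob flats F.1 G.1 = mu ℤ F G := by
  induction G using WellFoundedLT.induction with
  | ind G ih =>
    rcases h.eq_or_lt with rfl | hFG
    · rw [mob_self, mu_self]
    · rw [mob_of_ssubset hFG, mu_eq_neg_sum_Ico_of_ne hFG.ne,
        sum_filter_eq_sum_subtype fun _ => Finset.mem_Ico]
      refine congrArg Neg.neg (Finset.sum_congr rfl fun K hK => ?_)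
      obtain ⟨hFK, hKG⟩ := Finset.mem_Ico.1 hK
      exact ih K hKG hFK

lemma mob_filter_subset_subset (hFH : F ⊆ H) (hHG : H ⊆ G) :
    mob (flats.filter fun K => F ⊆ K ∧ K ⊆ G) F H = mob flats F H := by
  induction H using Finset.strongInduction with
  | H H ih =>
    rcases hFH.eq_or_ssubset with rfl | hlt
    · rw [mob_self, mob_self]
    · have hfilter : {K ∈ {K ∈ flats | F ⊆ K ∧ K ⊆ G} | F ⊆ K ∧ K ⊂ H} =
          {K ∈ flats | F ⊆ K ∧ K ⊂ H} := by
        rw [Finset.filter_filter]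
        exact Finset.filter_congr fun K _ =>
          ⟨And.right, fun hK => ⟨⟨hK.1, hK.2.subset.trans hHG⟩, hK⟩⟩
      rw [mob_of_ssubset hlt, mob_of_ssubset hlt, hfilter]
      refine congrArg Neg.neg (Finset.sum_congr rfl fun K hK => ?_)
      obtain ⟨-, hFK, hKH⟩ := Finset.mem_filter.1 hK
      exact ih K hKH hFK (hKH.subset.trans hHG)

lemma mob_image {β : Type*} [DecidableEq β] {φ : Finset α → Finset β}
    (hφ : ∀ K ∈ flats, ∀ K' ∈ flats, φ K ⊆ φ K' ↔ K ⊆ K') (hF : F ∈ flats) (hH : H ∈ flats)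
    (hFH : F ⊆ H) : mob (flats.image φ) (φ F) (φ H) = mob flats F H := by
  have hφ_lt : ∀ K ∈ flats, ∀ K' ∈ flats, φ K ⊂ φ K' ↔ K ⊂ K' := fun K hK K' hK' => by
    rw [ssubset_iff_subset_not_subset, ssubset_iff_subset_not_subset, hφ K hK K' hK',
      hφ K' hK' K hK]
  have hinj : InjOn φ flats := fun K hK K' hK' h =>
    ((hφ K hK K' hK').1 h.subset).antisymm ((hφ K' hK' K hK).1 h.superset)
  induction H using Finset.strongInduction with
  | H H ih =>
    rcases hFH.eq_or_ssubset with rfl | hlt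
    · rw [mob_self, mob_self]
    · have hfilter : {K ∈ flats | φ F ⊆ φ K ∧ φ K ⊂ φ H} = {K ∈ flats | F ⊆ K ∧ K ⊂ H} :=
        Finset.filter_congr fun K hK => and_congr (hφ F hF K hK) (hφ_lt K hK H hH)
      rw [mob_of_ssubset ((hφ_lt F hF H hH).2 hlt), mob_of_ssubset hlt, Finset.filter_image,
        hfilter, Finset.sum_image (hinj.mono (Finset.coe_subset.2 (Finset.filter_subset _ _)))]
      refine congrArg Neg.neg (Finset.sum_congr rfl fun K hK => ?_)
      obtain ⟨hKflats, hFK, hKH⟩ := Finset.mem_filter.1 hK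
      exact ih K hKH hKflats hFK

end Mob

section Minor

variable {α : Type*} {M : Matroid α} {F G H X : Set α}

lemma cast_rk (M : Matroid α) [M.RankFinite] (X : Set α) : (rk M X : ℕ∞) = M.eRk X := by
  obtain ⟨I, hI⟩ := M.exists_isBasis' X
  suffices rk M X = I.ncard by
    rw [this, hI.indep.finite.cast_ncard_eq, hI.encard_eq_eRk]
  refine IsGreatest.csSup_eq ⟨⟨I, ⟨hI.indep, hI.subset⟩, rfl⟩, ?_⟩
  rintro _ ⟨J, ⟨hJ, hJX⟩, rfl⟩
  have hJI := hJ.encard_le_eRk_of_subset hJX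
  rw [← hI.encard_eq_eRk, ← hJ.finite.cast_ncard_eq, ← hI.indep.finite.cast_ncard_eq] at hJI
  exact_mod_cast hJI

lemma mLoop_iff_isLoop {e : α} : mLoop M e ↔ M.IsLoop e :=
  ⟨fun h => (isLoop_iff_forall_notMem_isBase h.1).2 h.2,
    fun h => ⟨h.mem_ground, (isLoop_iff_forall_notMem_isBase h.mem_ground).1 h⟩⟩

lemma mMinor_eq_restrict_contract (M : Matroid α) (G F : Set α) :
    mMinor M G F = (M ↾ G) ／ F := rfl

lemma mMinor_closure (hG : M.IsFlat G) (hFG : F ⊆ G) (hX : X ⊆ G) :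
    (mMinor M G F).closure X = M.closure (X ∪ F) \ F := by
  have hXF := union_subset hX hFG
  rw [mMinor_eq_restrict_contract, contract_closure_eq,
    restrict_closure_eq M hXF hG.subset_ground, inter_eq_self_of_subset_left]
  exact (M.closure_subset_closure hXF).trans hG.closure.subset

lemma mMinor_isFlat_sdiff_iff (hG : M.IsFlat G) (hFH : F ⊆ H) (hHG : H ⊆ G) :
    (mMinor M G F).IsFlat (H \ F) ↔ M.IsFlat H := by
  have hHcl : F ⊆ M.closure H := hFH.trans (M.subset_closure H (hHG.trans hG.subset_ground))
  rw [isFlat_iff_closure_eq, isFlat_iff_closure_eq,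
    mMinor_closure hG (hFH.trans hHG) (sdiff_subset.trans hHG), sdiff_union_of_subset hFH]
  refine ⟨fun h => ?_, fun h => by rw [h]⟩
  rw [← sdiff_union_of_subset hHcl, h, sdiff_union_of_subset hFH]

lemma mMinor_loopless (hF : M.IsFlat F) (hG : M.IsFlat G) (hFG : F ⊆ G) :
    mLoopless (mMinor M G F) := fun e he => by
  have he' : e ∈ (mMinor M G F).closure ∅ := mLoop_iff_isLoop.1 he
  rw [mMinor_closure hG hFG (empty_subset G), empty_union, hF.closure, sdiff_self] at he'
  exact he'

lemma eRk_contract_sdiff_add_eRk (M : Matroid α) (hFH : F ⊆ H) :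
    (M ／ F).eRk (H \ F) + M.eRk F = M.eRk H := by
  obtain ⟨I, hI⟩ := M.exists_isBasis' F
  obtain ⟨J, hJ, hIJ⟩ := hI.indep.subset_isBasis'_of_subset (hI.subset.trans hFH)
  have hJF : I = J ∩ F := hI.eq_of_subset_indep (hJ.indep.inter_right F)
    (subset_inter hIJ hI.subset) inter_subset_right
  have hJ' := hJ.contract_isBasis' hI (hJ.indep.subset (union_subset sdiff_subset hIJ))
  rw [← hJ'.encard_eq_eRk, ← hI.encard_eq_eRk, ← hJ.encard_eq_eRk, hJF,
    encard_sdiff_add_encard_inter]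

lemma rk_mMinor_sdiff_add_rk [M.RankFinite] (hFH : F ⊆ H) (hHG : H ⊆ G) :
    rk (mMinor M G F) (H \ F) + rk M F = rk M H := by
  have h := eRk_contract_sdiff_add_eRk M hFH
  rw [← restrict_eRk_eq (M ／ F) (sdiff_subset_sdiff_left hHG),
    ← restrict_contract_eq_contract_restrict M (hFH.trans hHG), ← cast_rk, ← cast_rk,
    ← cast_rk] at h
  exact_mod_cast h

lemma mem_flatsF {m : ℕ} {M : Matroid (Fin m)} {G : Finset (Fin m)} :
    G ∈ flatsF M ↔ M.IsFlat ↑G := by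
  simp [flatsF]

lemma flatsF_mMinor {m : ℕ} {M : Matroid (Fin m)} {F G : Finset (Fin m)} (hG : M.IsFlat ↑G)
    (hFG : F ⊆ G) :
    flatsF (mMinor M ↑G ↑F) = {H ∈ flatsF M | F ⊆ H ∧ H ⊆ G}.image (· \ F) := by
  have hiff : ∀ H, F ⊆ H → H ⊆ G → (H \ F ∈ flatsF (mMinor M ↑G ↑F) ↔ H ∈ flatsF M) :=
    fun H hFH hHG => by
      rw [mem_flatsF, mem_flatsF, Finset.coe_sdiff,
        mMinor_isFlat_sdiff_iff hG (Finset.coe_subset.2 hFH) (Finset.coe_subset.2 hHG)]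
  ext K
  simp only [Finset.mem_image, Finset.mem_filter]
  constructor
  · intro hK
    have hKGF : K ⊆ G \ F := by
      rw [← Finset.coe_subset, Finset.coe_sdiff]
      exact (mem_flatsF.1 hK).subset_ground
    obtain ⟨hKG, hKF⟩ := Finset.subset_sdiff.1 hKGF
    have hsdiff : (K ∪ F) \ F = K := by rw [Finset.union_sdiff_right, hKF.sdiff_eq_left]
    have hunion : K ∪ F ⊆ G := Finset.union_subset hKG hFG
    refine ⟨K ∪ F, ⟨?_, Finset.subset_union_right, hunion⟩, hsdiff⟩
    rwa [← hiff _ Finset.subset_union_right hunion, hsdiff]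
  · rintro ⟨H, ⟨hH, hFH, hHG⟩, rfl⟩
    exact (hiff H hFH hHG).2 hH

end Minor

section FlatLattice

variable {m : ℕ} {M : Matroid (Fin m)}

/-- The lattice of flats of `M`, as the subtype of `flatsF M` ordered by inclusion. -/
abbrev FlatLattice (M : Matroid (Fin m)) : Type := {G : Finset (Fin m) // G ∈ flatsF M}

open Classical in
/-- The flat spanned by `X`: the closure of `X` as an element of the lattice of flats. -/
noncomputable def closureFlat (M : Matroid (Fin m)) (X : Set (Fin m)) : FlatLattice M :=
  ⟨Finset.univ.filter (· ∈ M.closure X), mem_flatsF.2 (by simp)⟩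

lemma coe_closureFlat (X : Set (Fin m)) : ((closureFlat M X).1 : Set (Fin m)) = M.closure X := by
  simp [closureFlat]

lemma FlatLattice.isFlat (G : FlatLattice M) : M.IsFlat ↑G.1 :=
  mem_flatsF.1 G.2

lemma closureFlat_le_iff {X : Set (Fin m)} (hX : X ⊆ M.E) {G : FlatLattice M} :
    closureFlat M X ≤ G ↔ X ⊆ ↑G.1 := by
  rw [← Subtype.coe_le_coe, ← Finset.coe_subset, coe_closureFlat]
  exact ⟨(M.subset_closure X).trans,
    fun h => (M.closure_subset_closure h).trans_eq G.isFlat.closure⟩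

lemma FlatLattice.union_subset_ground (F G : FlatLattice M) : (↑F.1 ∪ ↑G.1 : Set (Fin m)) ⊆ M.E :=
  union_subset F.isFlat.subset_ground G.isFlat.subset_ground

noncomputable instance : SemilatticeSup (FlatLattice M) where
  sup F G := closureFlat M (↑F.1 ∪ ↑G.1)
  le_sup_left F G :=
    subset_union_left.trans ((closureFlat_le_iff (F.union_subset_ground G)).1 le_rfl)
  le_sup_right F G :=
    subset_union_right.trans ((closureFlat_le_iff (F.union_subset_ground G)).1 le_rfl)
  sup_le F G _ hFH hGH := (closureFlat_le_iff (F.union_subset_ground G)).2 (union_subset hFH hGH)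

lemma FlatLattice.coe_sup (F G : FlatLattice M) :
    ((F ⊔ G).1 : Set (Fin m)) = M.closure (↑F.1 ∪ ↑G.1) :=
  coe_closureFlat _

/-- The rank function of `M` on its lattice of flats, with values in `ℤ`. -/
noncomputable def flatRank (M : Matroid (Fin m)) (G : FlatLattice M) : ℤ := rk M ↑G.1

lemma closureFlat_singleton_le_iff {i : Fin m} (hi : i ∈ M.E) {G : FlatLattice M} :
    closureFlat M {i} ≤ G ↔ i ∈ G.1 := by
  rw [closureFlat_le_iff (singleton_subset_iff.2 hi), singleton_subset_iff, Finset.mem_coe]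

lemma flatRank_sup_closureFlat_singleton {i : Fin m} (hi : i ∈ M.E) {G : FlatLattice M}
    (hiG : i ∉ G.1) : flatRank M (G ⊔ closureFlat M {i}) = flatRank M G + 1 := by
  have hiG' : i ∈ M.E \ M.closure ↑G.1 := ⟨hi, by rwa [G.isFlat.closure, Finset.mem_coe]⟩
  have heRk : M.eRk (G ⊔ closureFlat M {i}).1 = M.eRk G.1 + 1 := by
    rw [FlatLattice.coe_sup, coe_closureFlat, eRk_closure_eq, eRk_union_closure_right_eq,
      union_singleton, eRk_insert_eq_add_one hiG']
  rw [← cast_rk, ← cast_rk] at heRk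
  rw [flatRank, flatRank]
  exact_mod_cast heRk

lemma mob_flatsF_mMinor_sdiff {F G H : FlatLattice M} (hFH : F ≤ H) (hHG : H ≤ G) :
    mob (flatsF (mMinor M ↑G.1 ↑F.1)) ∅ (H.1 \ F.1) = mu ℤ F H := by
  have hmem : ∀ K : FlatLattice M, F ≤ K → K ≤ G → K.1 ∈ {K ∈ flatsF M | F.1 ⊆ K ∧ K ⊆ G.1} :=
    fun K hFK hKG => Finset.mem_filter.2 ⟨K.2, hFK, hKG⟩
  rw [flatsF_mMinor G.isFlat (hFH.trans hHG), ← Finset.sdiff_self F.1,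
    mob_image (fun _ _ _ hK' => sdiff_le_sdiff_iff_right (Finset.mem_filter.1 hK').2.1)
      (hmem F le_rfl (hFH.trans hHG)) (hmem H hFH hHG) hFH,
    mob_filter_subset_subset hFH hHG, mob_eq_mu F H hFH]

lemma rk_mMinor_ground_add_rk {F G : FlatLattice M} (hFG : F ≤ G) :
    rk (mMinor M ↑G.1 ↑F.1) (mMinor M ↑G.1 ↑F.1).E + rk M ↑F.1 = rk M ↑G.1 :=
  rk_mMinor_sdiff_add_rk hFG subset_rfl

lemma sum_flatsF_mMinor {F G : FlatLattice M} (hFG : F ≤ G) (f : Finset (Fin m) → ℤ) :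
    ∑ K ∈ flatsF (mMinor M ↑G.1 ↑F.1), f K = ∑ H ∈ Finset.Icc F G, f (H.1 \ F.1) := by
  have hinj : InjOn (· \ F.1) {H ∈ flatsF M | F.1 ⊆ H ∧ H ⊆ G.1} := fun K hK K' hK' h =>
    ((sdiff_le_sdiff_iff_right hK'.2.1).1 h.subset).antisymm
      ((sdiff_le_sdiff_iff_right hK.2.1).1 h.superset)
  rw [flatsF_mMinor G.isFlat hFG, Finset.sum_image (by simpa using hinj),
    sum_filter_eq_sum_subtype fun _ => Finset.mem_Icc]

lemma betaInv_mMinor {F G : FlatLattice M} (hFG : F < G) :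
    betaInv (mMinor M ↑G.1 ↑F.1) =
      (-1) ^ (rk M ↑F.1 + rk M ↑G.1) * mobiusConj (flatRank M) F G := by
  have hsum : ∑ K ∈ flatsF (mMinor M ↑G.1 ↑F.1),
      mob (flatsF (mMinor M ↑G.1 ↑F.1)) ∅ K * (rk (mMinor M ↑G.1 ↑F.1) ↑K : ℤ) =
      mobiusConj (flatRank M) F G :=
    calc
      _ = ∑ H ∈ Finset.Icc F G, mu ℤ F H * (flatRank M H - flatRank M F) := by
          rw [sum_flatsF_mMinor hFG.le]
          refine Finset.sum_congr rfl fun H hH => ?_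
          obtain ⟨hFH, hHG⟩ := Finset.mem_Icc.1 hH
          rw [mob_flatsF_mMinor_sdiff hFH hHG, Finset.coe_sdiff, flatRank, flatRank,
            ← rk_mMinor_sdiff_add_rk (M := M) (Finset.coe_subset.2 hFH) (Finset.coe_subset.2 hHG)]
          push_cast
          ring
      _ = mobiusConj (flatRank M) F G := by
          simp only [mul_sub, Finset.sum_sub_distrib, ← Finset.sum_mul]
          rw [sum_Icc_mu_right, if_neg hFG.ne, zero_mul, sub_zero, mobiusConj_apply]
  rw [betaInv, if_pos (mMinor_loopless F.isFlat G.isFlat hFG.le), hsum,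
    ← rk_mMinor_ground_add_rk hFG.le, add_left_comm, pow_add _ _ (_ + _),
    (Even.add_self _).neg_one_pow, mul_one]

lemma betaInv_mMinor_mul_betaInv_mMinor {F G F' : FlatLattice M} (hFG : F < G) (hGF' : G < F') :
    betaInv (mMinor M ↑G.1 ↑F.1) * betaInv (mMinor M ↑F'.1 ↑G.1) =
      (-1) ^ (rk M ↑F.1 + rk M ↑F'.1) *
        (mobiusConj (flatRank M) F G * mobiusConj (flatRank M) G F') := by
  have hsign : (-1 : ℤ) ^ rk M ↑G.1 * (-1) ^ rk M ↑G.1 = 1 := pow_mul_pow_eq_one _ (by norm_num)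
  rw [betaInv_mMinor hFG, betaInv_mMinor hGF', pow_add, pow_add, pow_add]
  linear_combination ((-1) ^ rk M ↑F.1 * (-1) ^ rk M ↑F'.1 *
    (mobiusConj (flatRank M) F G * mobiusConj (flatRank M) G F')) * hsign

theorem two_mul_sum_betaInv_mul_betaInv {F F' : FlatLattice M} (hFF' : F < F') {i : Fin m}
    (hi : i ∈ F'.1 \ F.1) :
    2 * ∑ G ∈ flatsF M with (F.1 ⊂ G ∧ G ⊂ F'.1) ∧ i ∈ G,
      betaInv (mMinor M ↑G ↑F.1) * betaInv (mMinor M ↑F'.1 ↑G) =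
    (∑ G ∈ flatsF M with F.1 ⊂ G ∧ G ⊂ F'.1,
      betaInv (mMinor M ↑G ↑F.1) * betaInv (mMinor M ↑F'.1 ↑G))
      + (1 + rk M ↑F.1 - rk M ↑F'.1) * betaInv (mMinor M ↑F'.1 ↑F.1) := by
  obtain ⟨hiF', hiF⟩ := Finset.mem_sdiff.1 hi
  have hiE : i ∈ M.E := F'.isFlat.subset_ground hiF'
  have hr : ∀ G, ¬ closureFlat M {i} ≤ G →
      flatRank M (G ⊔ closureFlat M {i}) = flatRank M G + 1 := fun G hG =>
    flatRank_sup_closureFlat_singleton hiE (mt (closureFlat_singleton_le_iff hiE).2 hG)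
  have hmem : ∀ G, G ∈ {G ∈ Finset.Ioo F F' | closureFlat M {i} ≤ G} ↔
      (F.1 ⊂ G.1 ∧ G.1 ⊂ F'.1) ∧ i ∈ G.1 := fun G => by
    rw [Finset.mem_filter, Finset.mem_Ioo, closureFlat_singleton_le_iff hiE]
    rfl
  rw [sum_filter_eq_sum_subtype hmem,
    sum_filter_eq_sum_subtype (s := Finset.Ioo F F') fun _ => Finset.mem_Ioo,
    Finset.sum_congr rfl fun G hG =>
      betaInv_mMinor_mul_betaInv_mMinor ((hmem G).1 hG).1.1 ((hmem G).1 hG).1.2,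
    Finset.sum_congr rfl fun G hG =>
      betaInv_mMinor_mul_betaInv_mMinor (Finset.mem_Ioo.1 hG).1 (Finset.mem_Ioo.1 hG).2,
    ← Finset.mul_sum, ← Finset.mul_sum, betaInv_mMinor hFF']
  have h := two_mul_sum_Ioo_mobiusConj_mul_mobiusConj hr hFF'
    (mt (closureFlat_singleton_le_iff hiE).1 hiF) ((closureFlat_singleton_le_iff hiE).2 hiF')
  rw [mul_left_comm, h]
  simp only [flatRank]
  ring

end FlatLattice

lemma sum_smul_eVec_sdiff_apply {m : ℕ} {F : Finset (Fin m)} {i : Fin m} (hi : i ∉ F)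
    (s : Finset (Finset (Fin m))) (w : Finset (Fin m) → ℝ) :
    (∑ G ∈ s, w G • eVec (G \ F)) i = ∑ G ∈ s with i ∈ G, w G := by
  simp [eVec, hi, Finset.sum_apply, Finset.sum_filter]

theorem csm_interval_balanced_general {m : ℕ} (M : Matroid (Fin m)) (F F' : Finset (Fin m))
    (hF : M.IsFlat ↑F) (hF' : M.IsFlat ↑F') (hFF' : F ⊂ F') :
    ∑ G ∈ (flatsF M).filter (fun G => F ⊂ G ∧ G ⊂ F'),
        ((betaInv (mMinor M ↑G ↑F) * betaInv (mMinor M ↑F' ↑G) : ℤ) : ℝ) • eVec (G \ F)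
      = ((((∑ G ∈ (flatsF M).filter (fun G => F ⊂ G ∧ G ⊂ F'),
            betaInv (mMinor M ↑G ↑F) * betaInv (mMinor M ↑F' ↑G))
          + (1 + rk M ↑F - rk M ↑F') * betaInv (mMinor M ↑F' ↑F) : ℤ) : ℝ) / 2) •
        eVec (F' \ F) := by
  ext i
  by_cases hi : i ∈ F' \ F
  · rw [← two_mul_sum_betaInv_mul_betaInv (F := ⟨F, mem_flatsF.2 hF⟩)
      (F' := ⟨F', mem_flatsF.2 hF'⟩) hFF' hi,
      sum_smul_eVec_sdiff_apply (Finset.mem_sdiff.1 hi).2, Finset.filter_filter, Pi.smul_apply,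
      eVec, if_pos hi]
    push_cast
    ring
  · have hiG : ∀ G ∈ (flatsF M).filter (fun G => F ⊂ G ∧ G ⊂ F'), i ∉ G \ F := fun G hG hiG =>
      hi (Finset.sdiff_subset_sdiff (Finset.mem_filter.1 hG).2.2.subset subset_rfl hiG)
    rw [Finset.sum_apply, Finset.sum_eq_zero fun G hG => by simp [eVec, hiG G hG]]
    simp [eVec, hi]

/-- Let `M` be a loopless matroid on `{0,…,n}` and let `F ⊊ F'` be flats
of `M`.  Then `∑_G β(M|G/F)·β(M|F'/G)·e_{G∖F}`, summed over all flats `G` with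
`F ⊊ G ⊊ F'`, is a scalar multiple of `e_{F'∖F}`. -/
theorem csm_interval_balanced {n : ℕ} (M : Matroid (Fin (n + 1)))
    (hE : M.E = Set.univ) (hM : mLoopless M)
    (F F' : Finset (Fin (n + 1))) (hF : M.IsFlat ↑F) (hF' : M.IsFlat ↑F') (hFF' : F ⊂ F') :
    ∃ c : ℝ,
      ∑ G ∈ (flatsF M).filter (fun G => F ⊂ G ∧ G ⊂ F'),
        ((betaInv (mMinor M ↑G ↑F) * betaInv (mMinor M ↑F' ↑G) : ℤ) : ℝ) • eVec (G \ F)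
        = c • eVec (F' \ F) :=
  ⟨_, csm_interval_balanced_general M F F' hF hF' hFF'⟩
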